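/- arXiv:2307.07809 — 2 statements merged into one kernel-verified Lean document; each statement's English description precedes it below -/
import Mathlib

section
/- Let m and ℓ be positive integers, let k be an integer and let p satisfy 0 < p < ℓ. Assume m divides kℓ + p, so that x = Δ^k s(0,p) is a periodic element of G(m,ℓ). Then the centralizer of x in G(m,ℓ) is exactly the set of integer powers of s(p,m) = a_p a_{p+1} ⋯ a_{p+m−1} (indices modulo m). -/
/-- The word `a_i a_{i+1} ⋯ a_{i+p-1}` (indices mod `m`) in the free group on `ZMod m`. -/
def circWord (m : ℕ) (i : ZMod m) (p : ℕ) : FreeGroup (ZMod m) :=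
  ((List.range p).map (fun k => FreeGroup.of (i + (k : ZMod m)))).prod

/-- The defining relations of the circular group `G(m,ℓ)`. -/
def circRels (m ℓ : ℕ) : Set (FreeGroup (ZMod m)) :=
  { r | ∃ i : ZMod m, r = circWord m i ℓ * (circWord m (i + 1) ℓ)⁻¹ }

/-- The circular group `G(m,ℓ)`. -/
abbrev CircularGroup (m ℓ : ℕ) := PresentedGroup (circRels m ℓ)

/-- The generator `a_i` of the circular group `G(m,ℓ)`. -/
def circGen (m ℓ : ℕ) (i : ZMod m) : CircularGroup m ℓ :=
  PresentedGroup.of i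

/-- The element `s(i,p) = a_i a_{i+1} ⋯ a_{i+p-1}` of the circular group `G(m,ℓ)`. -/
def circS (m ℓ : ℕ) (i : ZMod m) (p : ℕ) : CircularGroup m ℓ :=
  ((List.range p).map (fun k => circGen m ℓ (i + (k : ZMod m)))).prod

/-- The Garside element `Δ = s(0,ℓ)` of the circular group `G(m,ℓ)`. -/
def circDelta (m ℓ : ℕ) : CircularGroup m ℓ := circS m ℓ 0 ℓ

/-! The shift `a_i ↦ a_{i+1}` is an automorphism of `G(m,ℓ)`, so `G(m,ℓ)` embeds as a normal
subgroup in `E = G(m,ℓ) ⋊ ℤ/m`. With `t` the generator of `ℤ/m` and `u = a_0 t`, the products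
telescope to `s(i,p) = t^i u^p t^{-(i+p)}`, and the relations of `G(m,ℓ)` say exactly that `u^ℓ` is
central in `E`. Hence `E` modulo `⟨u^ℓ⟩` is the free product `ℤ/ℓ * ℤ/m`, where the centralizer of a
nontrivial element of a factor lies in that factor; pulling back, the centralizer of `u^n` in `E` is
`⟨u⟩` whenever `ℓ ∤ n`. Some shift carries the periodic element `x` to `u^(kℓ+p)`, and `⟨u⟩` meets
`G(m,ℓ)` in the group generated by `u^m = s(0,m)`. -/

open Subgroup

section Subgroup

variable {G H : Type*} [Group G] [Group H]

theorem comap_centralizer_image_of_injective {f : G →* H} (hf : Function.Injective f) (s : Set G) :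
    (centralizer (f '' s)).comap f = centralizer s := by
  ext g
  simp [mem_centralizer_iff, ← map_mul, hf.eq_iff]

theorem zpowers_inf_ker (f : G →* H) (g : G) :
    zpowers g ⊓ f.ker = zpowers (g ^ orderOf (f g)) := by
  ext x
  simp only [mem_inf, MonoidHom.mem_ker, mem_zpowers_iff]
  constructor
  · rintro ⟨⟨n, rfl⟩, hn⟩
    rw [map_zpow, ← orderOf_dvd_iff_zpow_eq_one] at hn
    obtain ⟨q, rfl⟩ := hn
    exact ⟨q, by rw [zpow_mul, zpow_natCast]⟩
  · rintro ⟨q, rfl⟩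
    exact ⟨⟨orderOf (f g) * q, by rw [zpow_mul, zpow_natCast]⟩, by simp [pow_orderOf_eq_one]⟩

theorem normal_zpowers_of_mem_center {g : G} (hg : g ∈ center G) : (zpowers g).Normal where
  conj_mem x hx y := by
    have hcomm : y * x = x * y := mem_center_iff.mp (zpowers_le.mpr hg hx) y
    rwa [hcomm, mul_inv_cancel_right]

end Subgroup

section FreeProduct

open Monoid CoprodI

variable {ι : Type*} {G : ι → Type*} [∀ i, Group (G i)]

theorem neWord_length_eq_of_prod_eq {i j k l : ι} {v : NeWord G i j} {w : NeWord G k l}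
    (h : v.prod = w.prod) : v.toList.length = w.toList.length := by
  classical
  have hword : v.toWord = w.toWord := Word.equiv.symm.injective h
  exact congrArg (fun u : Word G => u.toList.length) hword

theorem exists_eq_of_mul_neWord_prod {i : ι} {z : CoprodI G}
    (hz : z ∉ (of : G i →* CoprodI G).range) :
    ∃ (g : G i) (j k : ι) (w : NeWord G j k), j ≠ i ∧ z = of g * w.prod := by
  classical
  obtain ⟨⟨g, v, hv⟩, rfl⟩ := (Word.equiv.trans (Word.equivPair i)).symm.surjective z
  have hprod : (Word.equiv.trans (Word.equivPair i)).symm ⟨g, v, hv⟩ = of g * v.prod :=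
    Word.prod_rcons _
  rw [hprod] at hz ⊢
  have hne : v ≠ Word.empty := by
    rintro rfl
    exact hz ⟨g, by simp⟩
  obtain ⟨j, k, w, rfl⟩ := NeWord.of_word v hne
  exact ⟨g, j, k, w, fun hj => hv (by simp [Word.fstIdx, NeWord.toWord, hj]), rfl⟩

/-- Otherwise `z = c w` with `c` in the factor and `w` a nonempty reduced word starting in another
factor. Then `h = w⁻¹ (c⁻¹ g c) w`, where the right-hand side is reduced of length at least three.
-/
theorem mem_range_of_of_semiconjBy {i : ι} {g h : G i} (hg : g ≠ 1) {z : CoprodI G}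
    (hz : SemiconjBy z (of h) (of g)) : z ∈ (of : G i →* CoprodI G).range := by
  by_contra hrange
  obtain ⟨c, j, k, w, hj, rfl⟩ := exists_eq_of_mul_neWord_prod hrange
  have hconj : c⁻¹ * g * c ≠ 1 := by
    simpa [mul_assoc, inv_mul_eq_one] using hg
  have hh : h ≠ 1 := by
    rintro rfl
    exact hg (of_injective i (by simpa [SemiconjBy] using hz))
  have hprod : ((w.inv.append hj (.singleton _ hconj)).append hj.symm w).prod =
      (NeWord.singleton h hh).prod := by
    have hz' := hz.eq
    simp only [NeWord.append_prod, NeWord.inv_prod, NeWord.prod_singleton, map_mul, map_inv,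
      mul_assoc] at hz' ⊢
    rw [← hz', inv_mul_cancel_left, inv_mul_cancel_left]
  have hlength := neWord_length_eq_of_prod_eq hprod
  have hpos := List.length_pos_iff.mpr w.toList_ne_nil
  simp only [NeWord.toList, List.length_append, List.length_singleton] at hlength
  omega

end FreeProduct

section ZMod

variable {K : Type*} [Group K]

/-- The homomorphism from the cyclic group `ℤ/n` sending the generator to an element `g` with
`g ^ n = 1`. -/
def zmodPowersHom (n : ℕ) (g : K) (hg : g ^ n = 1) : Multiplicative (ZMod n) →* K :=
  AddMonoidHom.toMultiplicativeLeft
    (ZMod.lift n ⟨zmultiplesHom (Additive K) (.ofMul g), by simp [← ofMul_pow, hg]⟩)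

theorem zmodPowersHom_ofAdd_one (n : ℕ) (g : K) (hg : g ^ n = 1) :
    zmodPowersHom n g hg (.ofAdd 1) = g := by
  have h := ZMod.lift_coe n (⟨zmultiplesHom (Additive K) (.ofMul g), by simp [← ofMul_pow, hg]⟩ :
    {f : ℤ →+ Additive K // f n = 0}) 1
  rw [Int.cast_one] at h
  simpa [zmodPowersHom] using congrArg Additive.toMul h

theorem zpowers_ofAdd_one_eq_top (n : ℕ) : zpowers (Multiplicative.ofAdd (1 : ZMod n)) = ⊤ :=
  (eq_top_iff' _).mpr fun c => by
    obtain ⟨e, he⟩ := ZMod.intCast_surjective c.toAdd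
    exact mem_zpowers_iff.mpr ⟨e, by rw [← ofAdd_zsmul, zsmul_one, he, ofAdd_toAdd]⟩

end ZMod

section ConsecutiveProduct

variable {R : Type*} [AddMonoidWithOne R] {K L : Type*}

/-- The product `f i * f (i + 1) * ⋯ * f (i + p - 1)` of `p` consecutive values of `f`. -/
def consecutiveProd [Monoid K] (f : R → K) (i : R) (p : ℕ) : K :=
  ((List.range p).map fun k : ℕ => f (i + k)).prod

theorem map_consecutiveProd [Monoid K] [Monoid L] (φ : K →* L) (f : R → K) (i : R) (p : ℕ) :
    φ (consecutiveProd f i p) = consecutiveProd (fun j => φ (f j)) i p := by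
  simp [consecutiveProd, map_list_prod, Function.comp_def]

theorem consecutiveProd_telescope [Group K] (T : R → K) (u : K) (i : R) (p : ℕ) :
    consecutiveProd (fun j => T j * u * (T (j + 1))⁻¹) i p = T i * u ^ p * (T (i + p))⁻¹ := by
  induction p with
  | zero => simp [consecutiveProd]
  | succ p ih =>
    unfold consecutiveProd at ih ⊢
    rw [List.prod_range_succ, ih]
    simp [pow_succ, mul_assoc, add_assoc]

theorem consecutiveProd_telescope_of_commute {A : Type*} [AddCommMonoidWithOne A] [Group K]
    (T : Multiplicative A →* K) (u : K) {i : A} {p : ℕ} (h : Commute (u ^ p) (T (.ofAdd i))) :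
    consecutiveProd (fun j => T (.ofAdd j) * u * (T (.ofAdd (j + 1)))⁻¹) i p =
      u ^ p * (T (.ofAdd p))⁻¹ := by
  rw [consecutiveProd_telescope (fun j => T (.ofAdd j)), ← h.eq, add_comm, ofAdd_add, map_mul,
    mul_inv_rev, mul_assoc, mul_inv_cancel_left]

end ConsecutiveProduct

namespace CircularGroup

section CircularWords

variable {m ℓ : ℕ}

/-- In `circWord` and `circS` the list `List.range p` itself is coerced to a `List (ZMod m)`, so
unfolding alone does not give the product over natural numbers. -/
theorem circWord_eq_consecutiveProd (i : ZMod m) (p : ℕ) :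
    circWord m i p = consecutiveProd FreeGroup.of i p := by
  simp [circWord, consecutiveProd, ← List.map_eq_flatMap, Function.comp_def]

theorem circS_eq_consecutiveProd (i : ZMod m) (p : ℕ) :
    circS m ℓ i p = consecutiveProd (circGen m ℓ) i p := by
  simp [circS, consecutiveProd, ← List.map_eq_flatMap, Function.comp_def]

theorem mk_circWord (i : ZMod m) (p : ℕ) :
    PresentedGroup.mk (circRels m ℓ) (circWord m i p) = circS m ℓ i p := by
  rw [circWord_eq_consecutiveProd, circS_eq_consecutiveProd, map_consecutiveProd]
  rfl

theorem map_circS {K : Type*} [Group K] (φ : CircularGroup m ℓ →* K) (i : ZMod m) (p : ℕ) :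
    φ (circS m ℓ i p) = consecutiveProd (fun j => φ (circGen m ℓ j)) i p := by
  rw [circS_eq_consecutiveProd, map_consecutiveProd]

theorem circS_add_one (i : ZMod m) : circS m ℓ (i + 1) ℓ = circS m ℓ i ℓ := by
  rw [← mk_circWord, ← mk_circWord]
  exact (PresentedGroup.mk_eq_mk_of_mul_inv_mem (rels := circRels m ℓ) ⟨i, rfl⟩).symm

theorem circS_eq_circDelta (i : ZMod m) : circS m ℓ i ℓ = circDelta m ℓ := by
  obtain ⟨n, rfl⟩ := ZMod.intCast_surjective i
  induction n with
  | zero => rw [Int.cast_zero, circDelta]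
  | succ n ih => rw [Int.cast_add, Int.cast_one, circS_add_one, ih]
  | pred n ih => rw [← circS_add_one, Int.cast_sub, Int.cast_one, sub_add_cancel, ih]

end CircularWords

section UniversalProperty

variable {m ℓ : ℕ} {K : Type*} [Group K]

/-- The homomorphism out of `G(m,ℓ)` given by images of the generators all of whose consecutive
products of length `ℓ` agree. -/
def lift (f : ZMod m → K) (hf : ∀ i, consecutiveProd f i ℓ = consecutiveProd f (i + 1) ℓ) :
    CircularGroup m ℓ →* K :=
  PresentedGroup.toGroup (f := f) (by
    rintro _ ⟨i, rfl⟩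
    simpa [circWord_eq_consecutiveProd, map_consecutiveProd, mul_inv_eq_one] using hf i)

theorem lift_circGen (f : ZMod m → K)
    (hf : ∀ i, consecutiveProd f i ℓ = consecutiveProd f (i + 1) ℓ) (i : ZMod m) :
    lift f hf (circGen m ℓ i) = f i :=
  PresentedGroup.toGroup.of _

theorem hom_ext {f g : CircularGroup m ℓ →* K}
    (h : ∀ i, f (circGen m ℓ i) = g (circGen m ℓ i)) : f = g :=
  PresentedGroup.ext h

end UniversalProperty

section Shift

variable {m ℓ : ℕ}

/-- The endomorphism `a_i ↦ a_{i+j}` of `G(m,ℓ)`. -/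
def shiftHom (m ℓ : ℕ) (j : ZMod m) : CircularGroup m ℓ →* CircularGroup m ℓ :=
  lift (fun i => circGen m ℓ (i + j)) fun i => by
    have h := circS_add_one (ℓ := ℓ) (i + j)
    simp only [circS_eq_consecutiveProd, consecutiveProd] at h ⊢
    convert h.symm using 5 <;> ring

theorem shiftHom_circGen (j i : ZMod m) :
    shiftHom m ℓ j (circGen m ℓ i) = circGen m ℓ (i + j) :=
  lift_circGen _ _ _

theorem shiftHom_comp (j j' : ZMod m) :
    (shiftHom m ℓ j).comp (shiftHom m ℓ j') = shiftHom m ℓ (j + j') :=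
  hom_ext fun i => by
    simp only [MonoidHom.comp_apply, shiftHom_circGen, add_assoc, add_comm j']

theorem shiftHom_zero : shiftHom m ℓ 0 = MonoidHom.id _ :=
  hom_ext fun i => by simp [shiftHom_circGen]

/-- The action of `ℤ/m` on `G(m,ℓ)` by cyclic shifts of the generators. -/
def shift (m ℓ : ℕ) : Multiplicative (ZMod m) →* MulAut (CircularGroup m ℓ) where
  toFun j := MonoidHom.toMulEquiv (shiftHom m ℓ j.toAdd) (shiftHom m ℓ (-j.toAdd))
    (by rw [shiftHom_comp, neg_add_cancel, shiftHom_zero])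
    (by rw [shiftHom_comp, add_neg_cancel, shiftHom_zero])
  map_one' := MulEquiv.ext fun x => DFunLike.congr_fun shiftHom_zero x
  map_mul' j j' := MulEquiv.ext fun x =>
    (DFunLike.congr_fun (shiftHom_comp j.toAdd j'.toAdd) x).symm

theorem shift_circGen (j i : ZMod m) :
    shift m ℓ (.ofAdd j) (circGen m ℓ i) = circGen m ℓ (i + j) :=
  shiftHom_circGen j i

theorem shift_circS (j i : ZMod m) (p : ℕ) :
    shift m ℓ (.ofAdd j) (circS m ℓ i p) = circS m ℓ (i + j) p := by
  have h := map_circS (shift m ℓ (.ofAdd j)).toMonoidHom i p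
  simp only [MulEquiv.coe_toMonoidHom, shift_circGen] at h
  rw [h, circS_eq_consecutiveProd]
  simp only [consecutiveProd, add_right_comm]

theorem shift_circDelta (j : ZMod m) : shift m ℓ (.ofAdd j) (circDelta m ℓ) = circDelta m ℓ := by
  rw [circDelta, shift_circS, circS_eq_circDelta, circDelta]

end Shift

section Extension

variable {m ℓ : ℕ} {K : Type*} [Group K]

/-- The extension `G(m,ℓ) ⋊ ℤ/m` of the circular group by the cyclic shifts of its generators. -/
abbrev Extended (m ℓ : ℕ) := CircularGroup m ℓ ⋊[shift m ℓ] Multiplicative (ZMod m)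

/-- The embedding of `G(m,ℓ)` into its extension. -/
abbrev incl (m ℓ : ℕ) : CircularGroup m ℓ →* Extended m ℓ := SemidirectProduct.inl

/-- The embedding of the group `ℤ/m` of shifts into the extension. -/
abbrev rot (m ℓ : ℕ) : Multiplicative (ZMod m) →* Extended m ℓ := SemidirectProduct.inr

/-- The element `a_0 t` of the extension, where `t` is the shift by one. Its `ℓ`-th power is central
and its `m`-th power is `s(0,m)`. -/
def root (m ℓ : ℕ) : Extended m ℓ := incl m ℓ (circGen m ℓ 0) * rot m ℓ (.ofAdd 1)

theorem incl_circGen (i : ZMod m) :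
    incl m ℓ (circGen m ℓ i) = rot m ℓ (.ofAdd i) * root m ℓ * (rot m ℓ (.ofAdd (i + 1)))⁻¹ := by
  have h := SemidirectProduct.inl_aut (φ := shift m ℓ) (.ofAdd i) (circGen m ℓ 0)
  rw [shift_circGen, zero_add, map_inv] at h
  rw [h, root, ofAdd_add, map_mul]
  group

theorem incl_circS (i : ZMod m) (p : ℕ) :
    incl m ℓ (circS m ℓ i p) =
      rot m ℓ (.ofAdd i) * root m ℓ ^ p * (rot m ℓ (.ofAdd (i + p)))⁻¹ := by
  rw [map_circS]
  simp only [incl_circGen]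
  exact consecutiveProd_telescope (fun j => rot m ℓ (.ofAdd j)) (root m ℓ) i p

theorem Extended.hom_ext {f g : Extended m ℓ →* K} (hroot : f (root m ℓ) = g (root m ℓ))
    (hrot : ∀ j, f (rot m ℓ j) = g (rot m ℓ j)) : f = g := by
  refine SemidirectProduct.hom_ext (CircularGroup.hom_ext fun i => ?_) (MonoidHom.ext hrot)
  change f (incl m ℓ (circGen m ℓ i)) = g (incl m ℓ (circGen m ℓ i))
  simp only [incl_circGen, map_mul, map_inv, hroot, hrot]

theorem commute_root_pow_rot (j : Multiplicative (ZMod m)) :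
    Commute (root m ℓ ^ ℓ) (rot m ℓ j) := by
  have h : incl m ℓ (circS m ℓ j.toAdd ℓ) = incl m ℓ (circS m ℓ 0 ℓ) := by
    rw [circS_eq_circDelta, circS_eq_circDelta]
  rw [incl_circS, incl_circS, zero_add, ofAdd_zero, map_one, one_mul, add_comm, ofAdd_add,
    map_mul, ofAdd_toAdd, mul_inv_rev, ← mul_assoc, mul_left_inj, mul_inv_eq_iff_eq_mul] at h
  exact h.symm

theorem root_pow_mem_center : root m ℓ ^ ℓ ∈ center (Extended m ℓ) := by
  have hconj : (MulAut.conj (root m ℓ ^ ℓ)).toMonoidHom = MonoidHom.id _ :=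
    Extended.hom_ext (mul_inv_eq_iff_eq_mul.mpr (Commute.pow_self _ _).eq)
      fun j => mul_inv_eq_iff_eq_mul.mpr (commute_root_pow_rot j).eq
  exact mem_center_iff.mpr fun y =>
    (mul_inv_eq_iff_eq_mul.mp (DFunLike.congr_fun hconj y)).symm

/-- The universal property of `Extended m ℓ` as the group generated by `ℤ/m` and an element `u`
whose `ℓ`-th power commutes with `ℤ/m`. -/
def Extended.lift (T : Multiplicative (ZMod m) →* K) (u : K) (h : ∀ j, Commute (u ^ ℓ) (T j)) :
    Extended m ℓ →* K :=
  SemidirectProduct.lift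
    (CircularGroup.lift (fun i => T (.ofAdd i) * u * (T (.ofAdd (i + 1)))⁻¹) fun i => by
      rw [consecutiveProd_telescope_of_commute T u (h _),
        consecutiveProd_telescope_of_commute T u (h _)])
    T fun j => CircularGroup.hom_ext fun i => by
      induction j using Multiplicative.rec with | _ j =>
      simp only [MonoidHom.comp_apply, MulEquiv.coe_toMonoidHom, shift_circGen, lift_circGen,
        MulAut.conj_apply]
      rw [add_right_comm, add_comm i j, add_comm _ j, ofAdd_add j, ofAdd_add j, map_mul, map_mul]
      group

theorem Extended.lift_rot (T : Multiplicative (ZMod m) →* K) (u : K)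
    (h : ∀ j, Commute (u ^ ℓ) (T j)) (j : Multiplicative (ZMod m)) :
    Extended.lift T u h (rot m ℓ j) = T j :=
  SemidirectProduct.lift_inr ..

theorem Extended.lift_root (T : Multiplicative (ZMod m) →* K) (u : K)
    (h : ∀ j, Commute (u ^ ℓ) (T j)) : Extended.lift T u h (root m ℓ) = u := by
  rw [root, map_mul, Extended.lift_rot, Extended.lift, SemidirectProduct.lift_inl, lift_circGen]
  simp

end Extension

section QuotientByCenter

variable {m ℓ : ℕ}

/-- The free product of `ℤ/ℓ` (index `true`) and `ℤ/m` (index `false`). -/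
abbrev CyclicFreeProd (m ℓ : ℕ) :=
  Monoid.CoprodI fun b : Bool => Multiplicative (ZMod (bif b then ℓ else m))

/-- The inclusion of the factor `ℤ/m`. -/
def factorM (m ℓ : ℕ) : Multiplicative (ZMod m) →* CyclicFreeProd m ℓ :=
  Monoid.CoprodI.of (M := fun b : Bool => Multiplicative (ZMod (bif b then ℓ else m))) (i := false)

/-- The inclusion of the factor `ℤ/ℓ`. -/
def factorL (m ℓ : ℕ) : Multiplicative (ZMod ℓ) →* CyclicFreeProd m ℓ :=
  Monoid.CoprodI.of (M := fun b : Bool => Multiplicative (ZMod (bif b then ℓ else m))) (i := true)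

theorem factorL_ofAdd_one_pow : factorL m ℓ (.ofAdd 1) ^ ℓ = 1 := by
  rw [← map_pow, ← ofAdd_nsmul, nsmul_one, ZMod.natCast_self, ofAdd_zero, map_one]

theorem range_factorL : (factorL m ℓ).range = zpowers (factorL m ℓ (.ofAdd 1)) := by
  rw [MonoidHom.range_eq_map, ← zpowers_ofAdd_one_eq_top, MonoidHom.map_zpowers]

/-- The projection of the extension onto `ℤ/ℓ * ℤ/m`, sending `root` to the generator of `ℤ/ℓ`. -/
def toFreeProd (m ℓ : ℕ) : Extended m ℓ →* CyclicFreeProd m ℓ :=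
  Extended.lift (factorM m ℓ) (factorL m ℓ (.ofAdd 1)) fun j => by
    rw [factorL_ofAdd_one_pow]
    exact Commute.one_left _

theorem toFreeProd_rot (j : Multiplicative (ZMod m)) :
    toFreeProd m ℓ (rot m ℓ j) = factorM m ℓ j :=
  Extended.lift_rot ..

theorem toFreeProd_root : toFreeProd m ℓ (root m ℓ) = factorL m ℓ (.ofAdd 1) :=
  Extended.lift_root ..

/-- By their universal properties, the free product and the quotient of the extension by the central
subgroup `⟨root ^ ℓ⟩` map to each other compatibly with the projections. -/
theorem ker_toFreeProd : (toFreeProd m ℓ).ker = zpowers (root m ℓ ^ ℓ) := by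
  have : (zpowers (root m ℓ ^ ℓ)).Normal := normal_zpowers_of_mem_center root_pow_mem_center
  let π := QuotientGroup.mk' (zpowers (root m ℓ ^ ℓ))
  have hroot : π (root m ℓ) ^ ℓ = 1 := by
    rw [← map_pow]
    exact (QuotientGroup.eq_one_iff _).mpr (mem_zpowers _)
  let back : CyclicFreeProd m ℓ →* Extended m ℓ ⧸ zpowers (root m ℓ ^ ℓ) :=
    Monoid.CoprodI.lift fun
      | true => zmodPowersHom ℓ (π (root m ℓ)) hroot
      | false => π.comp (rot m ℓ)
  have hback : back.comp (toFreeProd m ℓ) = π := by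
    refine Extended.hom_ext ?_ fun j => ?_
    · rw [MonoidHom.comp_apply, toFreeProd_root]
      exact (Monoid.CoprodI.lift_of ..).trans (zmodPowersHom_ofAdd_one ..)
    · rw [MonoidHom.comp_apply, toFreeProd_rot]
      exact Monoid.CoprodI.lift_of ..
  refine le_antisymm ?_ (zpowers_le.mpr ?_)
  · calc (toFreeProd m ℓ).ker ≤ (back.comp (toFreeProd m ℓ)).ker := fun y hy => by
          rw [MonoidHom.mem_ker, MonoidHom.comp_apply, hy, map_one]
      _ = zpowers (root m ℓ ^ ℓ) := by rw [hback, QuotientGroup.ker_mk']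
  · rw [MonoidHom.mem_ker, map_pow, toFreeProd_root, factorL_ofAdd_one_pow]

theorem centralizer_root_zpow {n : ℤ} (hn : ¬ (ℓ : ℤ) ∣ n) :
    centralizer {root m ℓ ^ n} = zpowers (root m ℓ) := by
  refine le_antisymm (fun y hy => ?_) (zpowers_le.mpr (mem_centralizer_singleton_iff.mpr
    (Commute.self_zpow _ n).eq))
  have hne : Multiplicative.ofAdd (1 : ZMod ℓ) ^ n ≠ 1 := by
    rwa [← ofAdd_zsmul, zsmul_one, Ne, ofAdd_eq_one, ZMod.intCast_zmod_eq_zero_iff_dvd]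
  have hcomm : Commute (toFreeProd m ℓ y) (factorL m ℓ (.ofAdd 1 ^ n)) := by
    rw [map_zpow, ← toFreeProd_root, ← map_zpow]
    exact Commute.map (mem_centralizer_singleton_iff.mp hy) _
  have hrange : toFreeProd m ℓ y ∈ (factorL m ℓ).range := mem_range_of_of_semiconjBy hne hcomm
  rw [range_factorL, ← toFreeProd_root, ← MonoidHom.map_zpowers, ← mem_comap, comap_map_eq,
    ker_toFreeProd] at hrange
  exact sup_le le_rfl (zpowers_le.mpr (npow_mem_zpowers _ ℓ)) hrange

end QuotientByCenter

section Periodic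

variable {m ℓ : ℕ}

theorem rightHom_root :
    SemidirectProduct.rightHom (root m ℓ) = Multiplicative.ofAdd (1 : ZMod m) := by
  simp [root]

theorem incl_circS_zero_self : incl m ℓ (circS m ℓ 0 m) = root m ℓ ^ m := by
  simp [incl_circS]

theorem comap_incl_zpowers_root :
    (zpowers (root m ℓ)).comap (incl m ℓ) = zpowers (circS m ℓ 0 m) := by
  refine map_injective (f := incl m ℓ) SemidirectProduct.inl_injective ?_
  rw [map_comap_eq, SemidirectProduct.range_inl_eq_ker_rightHom, inf_comm, zpowers_inf_ker,
    rightHom_root, orderOf_ofAdd_eq_addOrderOf, ZMod.addOrderOf_one, MonoidHom.map_zpowers,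
    incl_circS_zero_self]

theorem centralizer_eq_zpowers_of_incl_eq {x : CircularGroup m ℓ} {n : ℤ} (hn : ¬ (ℓ : ℤ) ∣ n)
    (hx : incl m ℓ x = root m ℓ ^ n) : centralizer {x} = zpowers (circS m ℓ 0 m) := by
  rw [← comap_centralizer_image_of_injective (f := incl m ℓ) SemidirectProduct.inl_injective,
    Set.image_singleton, hx, centralizer_root_zpow hn, comap_incl_zpowers_root]

theorem incl_circDelta : incl m ℓ (circDelta m ℓ) = root m ℓ ^ ℓ * rot m ℓ (.ofAdd (-ℓ)) := by
  rw [circDelta, incl_circS]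
  simp

theorem incl_circDelta_zpow_mul_circS_neg {k : ℤ} {p : ℕ} (hper : (m : ℤ) ∣ k * ℓ + p) :
    incl m ℓ (circDelta m ℓ ^ k * circS m ℓ (-p) p) = root m ℓ ^ (k * ℓ + p) := by
  have hrot : rot m ℓ (.ofAdd (-ℓ)) ^ k * rot m ℓ (.ofAdd (-p)) = 1 := by
    have hzero := (ZMod.intCast_zmod_eq_zero_iff_dvd _ m).mpr hper
    push_cast at hzero
    rw [← map_zpow, ← map_mul, ← ofAdd_zsmul, ← ofAdd_add, zsmul_eq_mul, mul_neg, ← neg_add, hzero,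
      neg_zero, ofAdd_zero, map_one]
  calc incl m ℓ (circDelta m ℓ ^ k * circS m ℓ (-p) p)
      = (root m ℓ ^ ℓ) ^ k * (rot m ℓ (.ofAdd (-ℓ)) ^ k * rot m ℓ (.ofAdd (-p))) *
          root m ℓ ^ p := by
        rw [map_mul, map_zpow, incl_circDelta, (commute_root_pow_rot _).mul_zpow, incl_circS]
        simp [mul_assoc]
    _ = root m ℓ ^ (k * ℓ + p) := by
        rw [hrot, mul_one, zpow_add, mul_comm k, zpow_mul, zpow_natCast, zpow_natCast]

end Periodic

end CircularGroup

open CircularGroup in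
theorem centralizer_periodic_circular_general {m ℓ : ℕ} {k : ℤ} {p : ℕ} (i : ZMod m)
    (hp : ¬ ℓ ∣ p) (hper : (m : ℤ) ∣ k * ℓ + p) :
    centralizer {circDelta m ℓ ^ k * circS m ℓ i p} = zpowers (circS m ℓ (i + p) m) := by
  have hn : ¬ (ℓ : ℤ) ∣ k * ℓ + p := by
    rwa [Int.dvd_add_right (Dvd.intro_left k rfl), Int.natCast_dvd_natCast]
  let σ : CircularGroup m ℓ →* CircularGroup m ℓ := (shift m ℓ (.ofAdd (-(i + p)))).toMonoidHom
  have hσ : Function.Injective σ := (shift m ℓ (.ofAdd (-(i + p)))).injective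
  have hx : σ (circDelta m ℓ ^ k * circS m ℓ i p) = circDelta m ℓ ^ k * circS m ℓ (-p) p := by
    rw [map_mul, map_zpow]
    simp only [σ, MulEquiv.coe_toMonoidHom, shift_circDelta, shift_circS, neg_add,
      add_neg_cancel_left]
  have hs : σ (circS m ℓ (i + p) m) = circS m ℓ 0 m := by
    simp only [σ, MulEquiv.coe_toMonoidHom, shift_circS, add_neg_cancel]
  rw [← comap_centralizer_image_of_injective hσ, Set.image_singleton, hx,
    centralizer_eq_zpowers_of_incl_eq hn (incl_circDelta_zpow_mul_circS_neg hper), ← hs,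
    ← MonoidHom.map_zpowers, comap_map_eq_self_of_injective hσ]

/-- The centralizer of the periodic element `x = Δ^k s(0,p)` (where `0 < p < ℓ` and
`m ∣ kℓ + p`) is the set of integer powers of `s(p,m)`. -/
theorem centralizer_periodic_circular (m ℓ : ℕ) (hm : 0 < m) (hℓ : 0 < ℓ)
    (k : ℤ) (p : ℕ) (hp : 0 < p) (hpℓ : p < ℓ) (hper : (m : ℤ) ∣ k * ℓ + p) :
    Subgroup.centralizer {(circDelta m ℓ) ^ k * circS m ℓ 0 p} =
      Subgroup.zpowers (circS m ℓ (p : ZMod m) m) := by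
  simpa only [zero_add] using
    centralizer_periodic_circular_general 0 (Nat.not_dvd_of_pos_of_lt hp hpℓ) hper
end

section
/- Let G be the hosohedral-type group associated to pairs (m_1,ℓ_1),…,(m_h,ℓ_h). For each j ∈ {1,…,h}, the natural group homomorphism φ_j : G(m_j,ℓ_j) → G sending the generator a_i of G(m_j,ℓ_j) to a_{j,i} is injective. -/
/-- The word `a_{j,i} a_{j,i+1} ⋯ a_{j,i+p-1}` (second indices mod `m j`) in the free group
on the disjoint union of the `ZMod (m j)`. -/
def hosoWord (h : ℕ) (m : Fin h → ℕ) (j : Fin h) (i : ZMod (m j)) (p : ℕ) :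
    FreeGroup (Σ j : Fin h, ZMod (m j)) :=
  ((List.range p).map (fun k => FreeGroup.of ⟨j, i + (k : ZMod (m j))⟩)).prod

/-- The defining relations of the hosohedral-type group associated to the pairs
`(m j, ℓ j)`: the circular relations `s_j(i, ℓ j) = s_j(i+1, ℓ j)` within each factor,
together with the identifications `s_j(0, ℓ j) = s_j'(0, ℓ j')` of the Garside elements. -/
def hosoRels (h : ℕ) (m ℓ : Fin h → ℕ) : Set (FreeGroup (Σ j : Fin h, ZMod (m j))) :=
  { r | (∃ (j : Fin h) (i : ZMod (m j)),
          r = hosoWord h m j i (ℓ j) * (hosoWord h m j (i + 1) (ℓ j))⁻¹) ∨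
        (∃ j j' : Fin h, r = hosoWord h m j 0 (ℓ j) * (hosoWord h m j' 0 (ℓ j'))⁻¹) }

/-- The hosohedral-type group associated to the pairs `(m j, ℓ j)`. -/
abbrev HosoGroup (h : ℕ) (m ℓ : Fin h → ℕ) := PresentedGroup (hosoRels h m ℓ)

/-- The generator `a_{j,i}` of the hosohedral-type group. -/
def hosoGen (h : ℕ) (m ℓ : Fin h → ℕ) (j : Fin h) (i : ZMod (m j)) : HosoGroup h m ℓ :=
  PresentedGroup.of ⟨j, i⟩

/-- The element `s_j(i,p) = a_{j,i} a_{j,i+1} ⋯ a_{j,i+p-1}` of the hosohedral-type group. -/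
def hosoS (h : ℕ) (m ℓ : Fin h → ℕ) (j : Fin h) (i : ZMod (m j)) (p : ℕ) :
    HosoGroup h m ℓ :=
  ((List.range p).map (fun k => hosoGen h m ℓ j (i + (k : ZMod (m j))))).prod

/-- The Garside element `Δ` of the hosohedral-type group, as the image of `s_j(0, ℓ j)`
(this is independent of `j` by the defining relations). -/
def hosoDelta (h : ℕ) (m ℓ : Fin h → ℕ) (j : Fin h) : HosoGroup h m ℓ :=
  hosoS h m ℓ j 0 (ℓ j)

/-- The `j`-th factor subgroup of the hosohedral-type group, generated by the
generators `a_{j,0}, …, a_{j, m_j - 1}`. -/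
def hosoFactor (h : ℕ) (m ℓ : Fin h → ℕ) (j : Fin h) : Subgroup (HosoGroup h m ℓ) :=
  Subgroup.closure (Set.range (hosoGen h m ℓ j))

/-!
The group `G` maps, compatibly with the factors, to the amalgamated product of the circular groups
`G(m_j, ℓ_j)` along the cyclic subgroups generated by their Garside elements `Δ_j = s_j(0, ℓ_j)`.
The homomorphism from `G(m_j, ℓ_j)` to `ℤ` sending every generator to `1` sends `Δ_j` to `ℓ_j ≠ 0`,
so these subgroups are all infinite cyclic. By the normal form theorem each factor then embeds in
the amalgamated product, hence already in `G`.
-/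

/-- The amalgamated product of the groups `G i` along the cyclic subgroups generated by the
elements `x i`, in which all the `x i` become equal. It is encoded as the pushout of the
homomorphisms `ℤ → G i` sending `1` to `x i`; when some `x i` has finite order these are not
injective, and the `G i` need not embed. -/
abbrev CyclicAmalgam {ι : Type*} {G : ι → Type*} [∀ i, Group (G i)] (x : ∀ i, G i) :=
  Monoid.PushoutI fun i => zpowersHom (G i) (x i)

namespace CyclicAmalgam

variable {ι : Type*} {G : ι → Type*} [∀ i, Group (G i)] (x : ∀ i, G i)

/-- The canonical homomorphism from the factor `G i` to the amalgamated product. -/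
abbrev of (i : ι) : G i →* CyclicAmalgam x :=
  Monoid.PushoutI.of i

lemma of_apply_eq_of_apply (i j : ι) : of x i (x i) = of x j (x j) := by
  have of_eq_base (k : ι) : of x k (x k) = Monoid.PushoutI.base _ (Multiplicative.ofAdd 1) := by
    rw [← Monoid.PushoutI.of_apply_eq_base _ k, zpowersHom_apply, toAdd_ofAdd, zpow_one]
  rw [of_eq_base i, of_eq_base j]

lemma of_injective {x : ∀ i, G i} (hx : ∀ i, ¬ IsOfFinOrder (x i)) (i : ι) :
    Function.Injective (of x i) :=
  Monoid.PushoutI.of_injective (fun j => injective_zpow_iff_not_isOfFinOrder.mpr (hx j)) i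

end CyclicAmalgam

section Circular

variable {m ℓ : ℕ}

lemma mk_circWord (i : ZMod m) (p : ℕ) :
    PresentedGroup.mk (circRels m ℓ) (circWord m i p) = circS m ℓ i p := by
  rw [circWord, map_list_prod, List.map_map]
  rfl

lemma circS_eq_circS_add_one (i : ZMod m) : circS m ℓ i ℓ = circS m ℓ (i + 1) ℓ := by
  rw [← mk_circWord, ← mk_circWord]
  exact PresentedGroup.mk_eq_mk_of_mul_inv_mem ⟨i, rfl⟩

variable (m ℓ) in
/-- The length homomorphism `G(m,ℓ) → ℤ`, sending every generator to `1`. The target is written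
multiplicatively. -/
def circLength : CircularGroup m ℓ →* Multiplicative ℤ :=
  PresentedGroup.toGroup (f := fun _ => Multiplicative.ofAdd 1) <| by
    rintro _ ⟨i, rfl⟩
    simp [circWord, map_list_prod, Function.comp_def]

lemma circLength_circGen (i : ZMod m) :
    circLength m ℓ (circGen m ℓ i) = Multiplicative.ofAdd 1 :=
  PresentedGroup.toGroup.of _

lemma circLength_circS (i : ZMod m) (p : ℕ) :
    circLength m ℓ (circS m ℓ i p) = Multiplicative.ofAdd (p : ℤ) := by
  simp [circS, map_list_prod, Function.comp_def, circLength_circGen, ← ofAdd_nsmul]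

lemma not_isOfFinOrder_circS (i : ZMod m) {p : ℕ} (hp : p ≠ 0) :
    ¬ IsOfFinOrder (circS m ℓ i p) := by
  intro hfin
  have hlength : IsOfFinOrder (Multiplicative.ofAdd (p : ℤ)) := by
    simpa only [circLength_circS] using (circLength m ℓ).isOfFinOrder hfin
  rw [isOfFinOrder_iff_eq_one, ofAdd_eq_one] at hlength
  exact hp (Int.natCast_eq_zero.mp hlength)

end Circular

section HosoLift

variable {h : ℕ} {m ℓ : Fin h → ℕ} {K : Type*} [Group K]
  (f : ∀ j, CircularGroup (m j) (ℓ j) →* K)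

lemma lift_hosoWord (j : Fin h) (i : ZMod (m j)) (p : ℕ) :
    FreeGroup.lift (fun a : Σ j, ZMod (m j) => f a.1 (circGen (m a.1) (ℓ a.1) a.2))
      (hosoWord h m j i p) = f j (circS (m j) (ℓ j) i p) := by
  -- The cast to `ZMod (m j)` is applied inside the mapped function in `hosoWord`, but elaborates
  -- to a monadic cast of the whole list `List.range p` in `circS`.
  simp [hosoWord, circS, map_list_prod, Function.comp_def, ← List.map_eq_flatMap]

/-- The universal property of the hosohedral-type group: homomorphisms from the circular groups
`G(m j, ℓ j)` that agree on the Garside elements extend to it. -/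
def hosoLift (hf : ∀ j j', f j (circDelta (m j) (ℓ j)) = f j' (circDelta (m j') (ℓ j'))) :
    HosoGroup h m ℓ →* K :=
  PresentedGroup.toGroup (f := fun a => f a.1 (circGen (m a.1) (ℓ a.1) a.2)) <| by
    rintro _ (⟨j, i, rfl⟩ | ⟨j, j', rfl⟩) <;>
      rw [map_mul, map_inv, mul_inv_eq_one, lift_hosoWord, lift_hosoWord]
    · rw [circS_eq_circS_add_one]
    · exact hf j j'

lemma hosoLift_hosoGen
    (hf : ∀ j j', f j (circDelta (m j) (ℓ j)) = f j' (circDelta (m j') (ℓ j')))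
    (j : Fin h) (i : ZMod (m j)) :
    hosoLift f hf (hosoGen h m ℓ j i) = f j (circGen (m j) (ℓ j) i) :=
  PresentedGroup.toGroup.of _

end HosoLift

/-- The natural homomorphism `φ_j : G(m_j, ℓ_j) → G` from a circular factor into the
hosohedral-type group, sending the generator `a_i` to `a_{j,i}`, is injective. -/
theorem factor_embedding_injective (h : ℕ) (m ℓ : Fin h → ℕ)
    (hm : ∀ j, 0 < m j) (hℓ : ∀ j, 0 < ℓ j) (hne : ∀ j, (m j, ℓ j) ≠ (1, 1))
    (j : Fin h) (φ : CircularGroup (m j) (ℓ j) →* HosoGroup h m ℓ)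
    (hφ : ∀ i : ZMod (m j), φ (circGen (m j) (ℓ j) i) = hosoGen h m ℓ j i) :
    Function.Injective φ := by
  let Δ (k : Fin h) := circDelta (m k) (ℓ k)
  have hΔ (k : Fin h) : ¬ IsOfFinOrder (Δ k) := not_isOfFinOrder_circS 0 (hℓ k).ne'
  let ψ : HosoGroup h m ℓ →* CyclicAmalgam Δ :=
    hosoLift (CyclicAmalgam.of Δ) (CyclicAmalgam.of_apply_eq_of_apply Δ)
  have hψφ : ψ.comp φ = CyclicAmalgam.of Δ j := PresentedGroup.ext fun i =>
    (congrArg ψ (hφ i)).trans (hosoLift_hosoGen _ _ j i)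
  have hinj : Function.Injective (ψ ∘ φ) := by
    rw [← MonoidHom.coe_comp, hψφ]
    exact CyclicAmalgam.of_injective hΔ j
  exact hinj.of_comp
end
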